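/- arXiv:2105.03924 — 2 statements merged into one kernel-verified Lean document; each statement's English description precedes it below -/
import Mathlib

section
/- In the path-constrained railway transition system, let k₁ and k₂ be configurations that are both safe, and suppose k₂ is non-regressive with respect to k₁, i.e., k₁ i ≤ k₂ i for every train i. Then k₂ is reachable from k₁. (There always exists a sequence of train movements, each respecting the free-slot condition, that drives the system from any safe state into any other safe state that is non-regressive with respect to it.) -/
/-- A *single move*: one train `i` advances one step along its path, the
destination node having a free slot not counting train `i`. -/
def Move {I N : Type*} [Fintype I] [DecidableEq I] [DecidableEq N]
    (c : N → ℕ) (L : I → ℕ) (p : ∀ i : I, Fin (L i + 1) → N)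
    (k k' : ∀ i : I, Fin (L i + 1)) : Prop :=
  ∃ (i : I) (h : (k i : ℕ) < L i),
    k' i = ⟨(k i : ℕ) + 1, Nat.succ_lt_succ h⟩ ∧
    (∀ j : I, j ≠ i → k' j = k j) ∧
    (Finset.univ.filter (fun j : I =>
        j ≠ i ∧ p j (k j) = p i ⟨(k i : ℕ) + 1, Nat.succ_lt_succ h⟩)).card
      < c (p i ⟨(k i : ℕ) + 1, Nat.succ_lt_succ h⟩)

/-- Reachability: reflexive–transitive closure of the single-move relation. -/
def Reachable {I N : Type*} [Fintype I] [DecidableEq I] [DecidableEq N]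
    (c : N → ℕ) (L : I → ℕ) (p : ∀ i : I, Fin (L i + 1) → N)
    (k k' : ∀ i : I, Fin (L i + 1)) : Prop :=
  Relation.ReflTransGen (Move c L p) k k'

/-- A configuration is *safe* if every node has a strictly free slot. -/
def SafeConfig {I N : Type*} [Fintype I] [DecidableEq I] [DecidableEq N]
    (c : N → ℕ) (L : I → ℕ) (p : ∀ i : I, Fin (L i + 1) → N)
    (k : ∀ i : I, Fin (L i + 1)) : Prop :=
  ∀ n : N, (Finset.univ.filter (fun i : I => p i (k i) = n)).card < c n

/-! The moving train may be allowed to fill the node it occupies, as long as every node has a free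
slot apart from that train: its next move is then always possible and keeps this property. Control
can be passed from it to any train on the same node, and to any train at all when that node is not
full. If the node is full, then by safety of the target some train on it has not finished its
journey, so an unfinished train can always be chosen to move next. -/

section

variable {I N : Type*} [Fintype I] [DecidableEq I] [DecidableEq N] {c : N → ℕ} {L : I → ℕ}
  {p : ∀ i : I, Fin (L i + 1) → N} {i j : I} {k k₁ k₂ : ∀ i : I, Fin (L i + 1)}

/-- Every node has a free slot once train `i` is disregarded. Since the node of train `i` may then
be full, this is weaker than `SafeConfig`; unlike safety, it survives the moves of train `i`. -/
def SafeExcept (c : N → ℕ) (L : I → ℕ) (p : ∀ i : I, Fin (L i + 1) → N) (i : I)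
    (k : ∀ i : I, Fin (L i + 1)) : Prop :=
  ∀ n : N, (Finset.univ.filter (fun j : I => j ≠ i ∧ p j (k j) = n)).card < c n

theorem safeExcept_iff : SafeExcept c L p i k ↔
    ∀ n : N, (Finset.univ.filter (fun j : I => p j (k j) = n)).card
      < c n + if p i (k i) = n then 1 else 0 := by
  refine forall_congr' fun n => ?_
  have hfilter : Finset.univ.filter (fun j : I => j ≠ i ∧ p j (k j) = n) =
      (Finset.univ.filter (fun j : I => p j (k j) = n)).erase i := by
    ext j
    simp
  rw [hfilter]
  split_ifs with hi
  · have hmem : i ∈ Finset.univ.filter (fun j : I => p j (k j) = n) := by simpa using hi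
    rw [← Finset.card_erase_add_one hmem, Nat.add_lt_add_iff_right]
  · rw [Finset.erase_eq_of_notMem (by simpa using hi), add_zero]

theorem SafeConfig.safeExcept (h : SafeConfig c L p k) (i : I) : SafeExcept c L p i k :=
  safeExcept_iff.2 fun n => (h n).trans_le (Nat.le_add_right _ _)

theorem SafeExcept.safeConfig (h : SafeExcept c L p i k)
    (hi : (Finset.univ.filter (fun j : I => p j (k j) = p i (k i))).card < c (p i (k i))) :
    SafeConfig c L p k := by
  intro n
  by_cases hn : p i (k i) = n
  · exact hn ▸ hi
  · simpa [hn] using safeExcept_iff.1 h n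

theorem SafeExcept.of_same_node (h : SafeExcept c L p i k) (hij : p j (k j) = p i (k i)) :
    SafeExcept c L p j k := by
  rw [safeExcept_iff] at h ⊢
  rwa [hij]

theorem SafeExcept.update (h : SafeExcept c L p i k) (a : Fin (L i + 1)) :
    SafeExcept c L p i (Function.update k i a) := by
  intro n
  refine (congrArg Finset.card (Finset.filter_congr fun j _ => ?_)).trans_lt (h n)
  exact and_congr_right fun hj => by rw [Function.update_of_ne hj]

theorem SafeExcept.move_update (h : SafeExcept c L p i k) {a : Fin (L i + 1)} (ha : k i ⋖ a) :
    Move c L p k (Function.update k i a) := by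
  have hval : (k i : ℕ) + 1 = a := Nat.covBy_iff_add_one_eq.1 (Fin.covBy_iff.1 ha)
  refine ⟨i, by omega, ?_, fun j hj => Function.update_of_ne hj _ _, h _⟩
  rw [Function.update_self]
  exact Fin.ext hval.symm

theorem SafeExcept.exists_lt_and_safeExcept (h : SafeExcept c L p i k) (h₂ : SafeConfig c L p k₂)
    (hlt : k < k₂) : ∃ j, k j < k₂ j ∧ SafeExcept c L p j k := by
  by_cases hfull : c (p i (k i)) ≤ (Finset.univ.filter (fun j : I => p j (k j) = p i (k i))).card
  · obtain ⟨j, hj, hj₂⟩ := Finset.exists_mem_notMem_of_card_lt_card ((h₂ _).trans_le hfull)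
    simp only [Finset.mem_filter_univ] at hj hj₂
    refine ⟨j, (hlt.le j).lt_of_ne fun heq => hj₂ ?_, h.of_same_node hj⟩
    rwa [← heq]
  · obtain ⟨-, j, hj⟩ := Pi.lt_def.1 hlt
    exact ⟨j, hj, (h.safeConfig (not_le.1 hfull)).safeExcept j⟩

theorem safe_to_safe_reachable_general (h₁ : SafeExcept c L p i k₁) (h₂ : SafeConfig c L p k₂)
    (hnr : k₁ ≤ k₂) : Reachable c L p k₁ k₂ := by
  induction k₁ using WellFoundedGT.induction generalizing i with
  | ind k ih =>
    obtain rfl | hlt := hnr.eq_or_lt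
    · exact .refl
    obtain ⟨j, hj, hsafe⟩ := h₁.exists_lt_and_safeExcept h₂ hlt
    obtain ⟨a, hja, ha⟩ := hj.exists_covby_le
    exact .head (hsafe.move_update hja) <|
      ih _ (lt_update_self_iff.2 hja.lt) (hsafe.update a)
        (update_le_iff.2 ⟨ha, fun l _ => hnr l⟩)

end

/-- any safe configuration `k₂` that is non-regressive with
respect to a safe configuration `k₁` is reachable from `k₁`. -/
theorem safe_to_safe_reachable
    {I N : Type*} [Fintype I] [DecidableEq I] [DecidableEq N]
    (c : N → ℕ) (L : I → ℕ) (p : ∀ i : I, Fin (L i + 1) → N)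
    (k₁ k₂ : ∀ i : I, Fin (L i + 1))
    (h₁ : SafeConfig c L p k₁) (h₂ : SafeConfig c L p k₂)
    (hnr : ∀ i : I, (k₁ i : ℕ) ≤ (k₂ i : ℕ)) :
    Reachable c L p k₁ k₂ := by
  obtain _ | ⟨⟨i⟩⟩ := isEmpty_or_nonempty I
  · exact Subsingleton.elim k₁ k₂ ▸ .refl
  · exact safe_to_safe_reachable_general (h₁.safeExcept i) h₂ hnr
end

section
/- In the path-constrained railway transition system, let k₁ and k₂ be configurations that are both safe with k₂ non-regressive with respect to k₁ (k₁ i ≤ k₂ i for every train i), and let i₀ be any train with k₁ i₀ < k₂ i₀. Then there exists a nonempty sequence of single moves driving the system from k₁ to k₂ whose first move advances train i₀. (Between safe states, the train that starts moving first can be chosen arbitrarily among those that must move.) -/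
/-!
Delete one train `j` from the configuration and ask that every node then has a free slot. Under
this condition `j` itself can always move, and moving it preserves the condition. Before the target
is reached, the train to delete can be chosen among those that still have to move: either the
configuration is safe and any of them will do, or some node is full. In the latter case `j` stands
at that node, and any other train there may be deleted instead; they cannot all have arrived, since
the target configuration is safe.
-/

section

variable {I N : Type*}

section Advance

variable [DecidableEq I] {L : I → ℕ} {k k₂ : ∀ i : I, Fin (L i + 1)} {i : I}

/-- The configuration in which train `i` has advanced one step along its path and every other train
has kept its index. The destination node is not required to have a free slot. -/
def advance (k : ∀ i : I, Fin (L i + 1)) {i : I} (hi : (k i : ℕ) < L i) :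
    ∀ j : I, Fin (L j + 1) :=
  Function.update k i ⟨(k i : ℕ) + 1, Nat.succ_lt_succ hi⟩

theorem advance_self (hi : (k i : ℕ) < L i) :
    advance k hi i = ⟨(k i : ℕ) + 1, Nat.succ_lt_succ hi⟩ :=
  Function.update_self ..

theorem advance_of_ne (hi : (k i : ℕ) < L i) {j : I} (hj : j ≠ i) : advance k hi j = k j :=
  Function.update_of_ne hj ..

theorem lt_advance (hi : (k i : ℕ) < L i) : k < advance k hi :=
  lt_update_self_iff.mpr (Nat.lt_succ_self (k i))

theorem advance_le (hle : k ≤ k₂) (hi : (k i : ℕ) < k₂ i) :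
    advance k (hi.trans_le (k₂ i).is_le) ≤ k₂ :=
  update_le_iff.mpr ⟨hi, fun j _ => hle j⟩

end Advance

variable [Fintype I] [DecidableEq N]

section TrainsAt

variable {L : I → ℕ} {p : ∀ i : I, Fin (L i + 1) → N} {k : ∀ i : I, Fin (L i + 1)} {n : N}

/-- The set of trains occupying node `n` in configuration `k`. -/
def trainsAt (p : ∀ i : I, Fin (L i + 1) → N) (k : ∀ i : I, Fin (L i + 1)) (n : N) : Finset I :=
  Finset.univ.filter fun i => p i (k i) = n

theorem mem_trainsAt {i : I} : i ∈ trainsAt p k n ↔ p i (k i) = n :=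
  Finset.mem_filter_univ i

theorem erase_trainsAt [DecidableEq I] (i : I) :
    (trainsAt p k n).erase i = Finset.univ.filter fun j => j ≠ i ∧ p j (k j) = n := by
  ext j
  simp only [Finset.mem_erase, mem_trainsAt, Finset.mem_filter_univ]

theorem erase_trainsAt_advance [DecidableEq I] {i : I} (hi : (k i : ℕ) < L i) :
    (trainsAt p (advance k hi) n).erase i = (trainsAt p k n).erase i := by
  ext j
  simp only [Finset.mem_erase, mem_trainsAt]
  exact and_congr_right fun hj => by rw [advance_of_ne hi hj]

end TrainsAt

variable [DecidableEq I] {c : N → ℕ} {L : I → ℕ} {p : ∀ i : I, Fin (L i + 1) → N}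
  {k k₂ : ∀ i : I, Fin (L i + 1)} {i j : I}

/-- The configuration `k` is safe once train `j` is deleted from it. This is the invariant kept
along the moves from one safe configuration to another. -/
def SafeWithout (c : N → ℕ) (L : I → ℕ) (p : ∀ i : I, Fin (L i + 1) → N)
    (k : ∀ i : I, Fin (L i + 1)) (j : I) : Prop :=
  ∀ n : N, ((trainsAt p k n).erase j).card < c n

theorem SafeConfig.safeWithout (h : SafeConfig c L p k) (j : I) : SafeWithout c L p k j :=
  fun n => Finset.card_erase_le.trans_lt (h n)

namespace SafeWithout

theorem move_advance (h : SafeWithout c L p k i) (hi : (k i : ℕ) < L i) :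
    Move c L p k (advance k hi) :=
  ⟨i, hi, advance_self hi, fun _ => advance_of_ne hi, by rw [← erase_trainsAt]; exact h _⟩

theorem advance (h : SafeWithout c L p k i) (hi : (k i : ℕ) < L i) :
    SafeWithout c L p (advance k hi) i := fun n => by
  rw [erase_trainsAt_advance]
  exact h n

theorem of_same_node (h : SafeWithout c L p k j) (hij : p i (k i) = p j (k j)) :
    SafeWithout c L p k i := fun n => by
  have hn := h n
  simp only [Finset.card_erase_eq_ite, mem_trainsAt, hij] at hn ⊢
  exact hn

theorem node_eq_of_full (h : SafeWithout c L p k j) {n : N} (hn : c n ≤ (trainsAt p k n).card) :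
    p j (k j) = n := by
  by_contra hj
  have hfree := h n
  rw [Finset.erase_eq_of_notMem (mt mem_trainsAt.mp hj)] at hfree
  exact hfree.not_ge hn

end SafeWithout

theorem SafeConfig.exists_lt_of_full (h₂ : SafeConfig c L p k₂) (hle : k ≤ k₂) {n : N}
    (hn : c n ≤ (trainsAt p k n).card) : ∃ i, p i (k i) = n ∧ k i < k₂ i := by
  by_contra! harrived
  have hsub : trainsAt p k n ⊆ trainsAt p k₂ n := fun i hi => by
    rw [mem_trainsAt] at hi ⊢
    rwa [← (hle i).antisymm (harrived i hi)]
  exact (hn.trans (Finset.card_le_card hsub)).not_gt (h₂ n)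

namespace SafeWithout

theorem exists_lt_safeWithout (h : SafeWithout c L p k j) (h₂ : SafeConfig c L p k₂)
    (hlt : k < k₂) : ∃ i, k i < k₂ i ∧ SafeWithout c L p k i := by
  by_cases hsafe : SafeConfig c L p k
  · obtain ⟨-, i, hi⟩ := Pi.lt_def.mp hlt
    exact ⟨i, hi, hsafe.safeWithout i⟩
  · obtain ⟨n, hn⟩ := not_forall.mp hsafe
    have hfull : c n ≤ (trainsAt p k n).card := not_lt.mp hn
    obtain ⟨i, hin, hi⟩ := h₂.exists_lt_of_full hlt.le hfull
    exact ⟨i, hi, h.of_same_node (hin.trans (h.node_eq_of_full hfull).symm)⟩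

theorem reachable (h : SafeWithout c L p k j) (h₂ : SafeConfig c L p k₂) (hle : k ≤ k₂) :
    Reachable c L p k k₂ := by
  induction k using WellFoundedGT.induction generalizing j with
  | ind k ih =>
    obtain rfl | hlt := hle.eq_or_lt
    · exact .refl
    · obtain ⟨i, hi, hsafe⟩ := h.exists_lt_safeWithout h₂ hlt
      have hiL : (k i : ℕ) < L i := (Fin.lt_def.mp hi).trans_le (k₂ i).is_le
      exact .head (hsafe.move_advance hiL)
        (ih _ (lt_advance hiL) (hsafe.advance hiL) (advance_le hle hi))

end SafeWithout

end

theorem first_mover_arbitrary_general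
    {I N : Type*} [Fintype I] [DecidableEq I] [DecidableEq N]
    (c : N → ℕ) (L : I → ℕ) (p : ∀ i : I, Fin (L i + 1) → N)
    (k₁ k₂ : ∀ i : I, Fin (L i + 1)) (i₀ : I)
    (h₁ : SafeWithout c L p k₁ i₀) (h₂ : SafeConfig c L p k₂)
    (hnr : ∀ i : I, (k₁ i : ℕ) ≤ (k₂ i : ℕ))
    (hi₀ : (k₁ i₀ : ℕ) < (k₂ i₀ : ℕ)) :
    ∃ k' : ∀ i : I, Fin (L i + 1),
      Move c L p k₁ k' ∧
      ((k' i₀ : ℕ) = (k₁ i₀ : ℕ) + 1) ∧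
      (∀ j : I, j ≠ i₀ → k' j = k₁ j) ∧
      Reachable c L p k' k₂ :=
  have hL : (k₁ i₀ : ℕ) < L i₀ := hi₀.trans_le (k₂ i₀).is_le
  ⟨advance k₁ hL, h₁.move_advance hL, congrArg Fin.val (advance_self hL),
    fun _ => advance_of_ne hL, (h₁.advance hL).reachable h₂ (advance_le hnr hi₀)⟩

/-- between safe states, the first train to move can be chosen
arbitrarily among the trains that must move: there is a nonempty sequence of
single moves from `k₁` to `k₂` whose first move advances train `i₀`. -/
theorem first_mover_arbitrary
    {I N : Type*} [Fintype I] [DecidableEq I] [DecidableEq N]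
    (c : N → ℕ) (L : I → ℕ) (p : ∀ i : I, Fin (L i + 1) → N)
    (k₁ k₂ : ∀ i : I, Fin (L i + 1))
    (h₁ : SafeConfig c L p k₁) (h₂ : SafeConfig c L p k₂)
    (hnr : ∀ i : I, (k₁ i : ℕ) ≤ (k₂ i : ℕ))
    (i₀ : I) (hi₀ : (k₁ i₀ : ℕ) < (k₂ i₀ : ℕ)) :
    ∃ k' : ∀ i : I, Fin (L i + 1),
      Move c L p k₁ k' ∧
      ((k' i₀ : ℕ) = (k₁ i₀ : ℕ) + 1) ∧
      (∀ j : I, j ≠ i₀ → k' j = k₁ j) ∧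
      Reachable c L p k' k₂ :=
  first_mover_arbitrary_general c L p k₁ k₂ i₀ (h₁.safeWithout i₀) h₂ hnr hi₀
end
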